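/- arXiv:math/0703198 — 3 statements merged into one kernel-verified Lean document; each statement's English description precedes it below -/
import Mathlib

section
/- Let d ≥ 1, We > 0, let G : ℝ → Matrix (Fin d) (Fin d) ℝ be continuous, and let B : ℝ → Matrix (Fin d) (Fin d) ℝ be differentiable with B'(t) = G(t) B(t) + B(t) G(t)ᵀ − (1/We) B(t) + (1/We) I for all t ≥ 0. If B(0) is symmetric positive definite, then B(t) is symmetric positive definite for every t ≥ 0. -/
/-!
Along two trajectories of the adjoint flow `w' = -Aᴴ w`, a solution of the Lyapunov equation
`B' = A B + B Aᴴ + Q` satisfies `(uᴴ B w)' = uᴴ Q w`. Ending the trajectories at time `t` in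
prescribed vectors therefore transports the symmetry and, when `Q ≥ 0`, the positivity of `B` from
an earlier time to `t`; a trajectory ending in a nonzero vector never vanishes, so strict positivity
is transported as well. Picard–Lindelöf provides the trajectories on intervals whose length is
bounded below, and finitely many of these cover `[0, T]`. The Oldroyd-B equation is the case
`A = G - (1 / (2 We)) I`, `Q = (1 / We) I`.
-/

open Matrix

lemma forall_mem_Icc_of_short_steps {P : ℝ → Prop} {T δ : ℝ} (hδ : 0 < δ) (h0 : P 0)
    (step : ∀ s t, 0 ≤ s → s ≤ t → t ≤ T → t - s ≤ δ → P s → P t) :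
    ∀ t ∈ Set.Icc 0 T, P t := by
  have reach (k : ℕ) : ∀ t ∈ Set.Icc 0 T, t ≤ k * δ → P t := by
    induction k with
    | zero =>
      intro t ht htk
      have : t = 0 := le_antisymm (by simpa using htk) ht.1
      exact this ▸ h0
    | succ k ih =>
      intro t ht htk
      push_cast at htk
      have hprev : max 0 (t - δ) ≤ t := max_le ht.1 (by linarith)
      refine step (max 0 (t - δ)) t (le_max_left _ _) hprev ht.2
        (by linarith [le_max_right 0 (t - δ)]) (ih _ ⟨le_max_left _ _, hprev.trans ht.2⟩ ?_)
      exact max_le (by positivity) (by linarith)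
  intro t ht
  obtain ⟨k, hk⟩ := exists_nat_ge (t / δ)
  exact reach k t ht ((div_le_iff₀ hδ).1 hk)

section LinearODE

open Set

variable {E : Type*} [NormedAddCommGroup E] [NormedSpace ℝ E] {L : ℝ → E →L[ℝ] E} {a b K : ℝ}

lemma eqOn_zero_of_hasDerivWithinAt_clm_apply (hK : ∀ r ∈ Icc a b, ‖L r‖ ≤ K) {w : ℝ → E}
    (hw : ∀ r ∈ Icc a b, HasDerivWithinAt w (L r (w r)) (Icc a b) r) (ha : w a = 0) :
    EqOn w 0 (Icc a b) :=
  eq_zero_of_abs_deriv_le_mul_abs_self_of_eq_zero_right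
    (fun r hr => (hw r hr).continuousWithinAt)
    (fun r hr => (hw r (Ico_subset_Icc_self hr)).mono_of_mem_nhdsWithin
      (Icc_mem_nhdsGE_of_mem hr)) ha
    (fun r hr => (L r).le_of_opNorm_le (hK r (Ico_subset_Icc_self hr)) (w r))

lemma exists_hasDerivWithinAt_clm_apply_of_short [CompleteSpace E]
    (hL : ContinuousOn L (Icc a b)) (hK : ∀ r ∈ Icc a b, ‖L r‖ ≤ K)
    (hshort : 2 * K * (b - a) ≤ 1) {t : ℝ} (ht : t ∈ Icc a b) (x : E) :
    ∃ w : ℝ → E, w t = x ∧ ∀ r ∈ Icc a b, HasDerivWithinAt w (L r (w r)) (Icc a b) r := by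
  have hK0 : 0 ≤ K := (norm_nonneg _).trans (hK t ht)
  lift K to NNReal using hK0
  -- On the ball of radius `‖x‖` about `x` the field has norm at most `2 * K * ‖x‖`.
  have hPL : IsPicardLindelof (fun r y => L r y) ⟨t, ht⟩ x ‖x‖₊ 0 (2 * K * ‖x‖₊) K :=
    { lipschitzOnWith := fun r hr =>
        ((L r).lipschitz.weaken (by exact_mod_cast hK r hr)).lipschitzOnWith
      continuousOn := fun y _ => hL.clm_apply continuousOn_const
      norm_le := fun r hr y hy => by
        have hy' : ‖y‖ ≤ 2 * ‖x‖ := by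
          have := norm_le_norm_add_norm_sub' y x
          have := mem_closedBall_iff_norm.1 hy
          simp only [coe_nnnorm] at this
          linarith
        calc ‖L r y‖ ≤ K * ‖y‖ := (L r).le_of_opNorm_le (hK r hr) y
          _ ≤ K * (2 * ‖x‖) := by gcongr
          _ = 2 * K * ‖x‖ := by ring
      mul_max_le := by
        have hmax : max (b - t) (t - a) ≤ b - a :=
          max_le (by linarith [ht.1]) (by linarith [ht.2])
        calc 2 * K * ‖x‖ * max (b - t) (t - a) ≤ 2 * K * ‖x‖ * (b - a) := by gcongr
          _ = 2 * K * (b - a) * ‖x‖ := by ring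
          _ ≤ 1 * ‖x‖ := by gcongr
          _ = ‖x‖ - 0 := by ring }
  exact hPL.exists_eq_forall_mem_Icc_hasDerivWithinAt₀

end LinearODE

section Calculus

variable {m n 𝕜 R : Type*} [Fintype n] [NontriviallyNormedField 𝕜] [NormedRing R]
  [NormedAlgebra 𝕜 R] {S : Set 𝕜} {t : 𝕜}

lemma hasDerivWithinAt_dotProduct {u v : 𝕜 → n → R} {u' v' : n → R}
    (hu : HasDerivWithinAt u u' S t) (hv : HasDerivWithinAt v v' S t) :
    HasDerivWithinAt (fun s => u s ⬝ᵥ v s) (u' ⬝ᵥ v t + u t ⬝ᵥ v') S t := by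
  simp only [dotProduct, ← Finset.sum_add_distrib]
  exact HasDerivWithinAt.fun_sum fun i _ =>
    (hasDerivWithinAt_pi.1 hu i).mul (hasDerivWithinAt_pi.1 hv i)

lemma hasDerivWithinAt_mulVec [Finite m] {M : 𝕜 → Matrix m n R} {M' : Matrix m n R}
    {v : 𝕜 → n → R} {v' : n → R}
    (hM : HasDerivWithinAt M M' S t) (hv : HasDerivWithinAt v v' S t) :
    HasDerivWithinAt (fun s => M s *ᵥ v s) (M' *ᵥ v t + M t *ᵥ v') S t :=
  hasDerivWithinAt_pi.2 fun i => hasDerivWithinAt_dotProduct (hasDerivWithinAt_pi.1 hM i) hv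

end Calculus

lemma isHermitian_iff_star_dotProduct_mulVec {n R : Type*} [Fintype n] [Semiring R] [StarRing R]
    {M : Matrix n n R} :
    M.IsHermitian ↔ ∀ x y, star x ⬝ᵥ (M *ᵥ y) = star (star y ⬝ᵥ (M *ᵥ x)) := by
  classical
  have hadjoint (x y : n → R) : star (star y ⬝ᵥ (M *ᵥ x)) = star x ⬝ᵥ (Mᴴ *ᵥ y) := by
    rw [← star_dotProduct, star_mulVec, dotProduct_mulVec]
  simp only [hadjoint]
  refine ⟨fun hM x y => by rw [hM.eq], fun h => ?_⟩
  ext i j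
  simpa [← Pi.single_star] using (h (Pi.single i 1) (Pi.single j 1)).symm

section Lyapunov

open Set
open scoped ComplexOrder

variable {n 𝕜 : Type*} [Fintype n] [RCLike 𝕜]

/-- The generator `x ↦ -Aᴴ x` of the flow adjoint to `x' = A x`, taken as a real-linear map because
time is real. -/
noncomputable def adjointGenerator (A : Matrix n n 𝕜) : (n → 𝕜) →L[ℝ] (n → 𝕜) :=
  LinearMap.toContinuousLinearMap ((-Aᴴ).mulVecLin.restrictScalars ℝ)

lemma adjointGenerator_apply (A : Matrix n n 𝕜) (x : n → 𝕜) :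
    adjointGenerator A x = -(Aᴴ *ᵥ x) :=
  neg_mulVec x Aᴴ

lemma continuous_adjointGenerator :
    Continuous (adjointGenerator : Matrix n n 𝕜 → (n → 𝕜) →L[ℝ] (n → 𝕜)) := by
  refine continuous_clm_apply.2 fun x => ?_
  simp only [adjointGenerator_apply]
  fun_prop

variable {A B Q : ℝ → Matrix n n 𝕜} {u w : ℝ → n → 𝕜} {S : Set ℝ} {s t : ℝ}

lemma hasDerivWithinAt_star_dotProduct_mulVec_of_lyapunov_ode
    (hB : HasDerivWithinAt B (A t * B t + B t * (A t)ᴴ + Q t) S t)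
    (hu : HasDerivWithinAt u (adjointGenerator (A t) (u t)) S t)
    (hw : HasDerivWithinAt w (adjointGenerator (A t) (w t)) S t) :
    HasDerivWithinAt (fun r => star (u r) ⬝ᵥ (B r *ᵥ w r)) (star (u t) ⬝ᵥ (Q t *ᵥ w t)) S t := by
  convert hasDerivWithinAt_dotProduct hu.star (hasDerivWithinAt_mulVec hB hw) using 1
  simp only [adjointGenerator_apply, star_neg, star_mulVec, conjTranspose_conjTranspose,
    neg_dotProduct, add_mulVec, dotProduct_add, mulVec_neg, dotProduct_neg, ← mulVec_mulVec,
    ← dotProduct_mulVec]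
  ring

lemma isHermitian_of_lyapunov_ode_of_trajectories (hst : s ≤ t)
    (hB : ∀ r ∈ Icc s t, HasDerivWithinAt B (A r * B r + B r * (A r)ᴴ + Q r) (Icc s t) r)
    (hQ : ∀ r ∈ Icc s t, (Q r).IsHermitian)
    (htraj : ∀ x, ∃ w : ℝ → n → 𝕜, w t = x ∧
      ∀ r ∈ Icc s t, HasDerivWithinAt w (adjointGenerator (A r) (w r)) (Icc s t) r)
    (hs : (B s).IsHermitian) : (B t).IsHermitian := by
  refine isHermitian_iff_star_dotProduct_mulVec.2 fun x y => ?_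
  obtain ⟨u, rfl, hu⟩ := htraj x
  obtain ⟨w, rfl, hw⟩ := htraj y
  have hderiv : ∀ r ∈ Icc s t, HasDerivWithinAt (fun r =>
      star (u r) ⬝ᵥ (B r *ᵥ w r) - star (star (w r) ⬝ᵥ (B r *ᵥ u r))) 0 (Icc s t) r := by
    intro r hr
    have hQr := isHermitian_iff_star_dotProduct_mulVec.1 (hQ r hr) (u r) (w r)
    rw [← sub_eq_zero.2 hQr]
    exact (hasDerivWithinAt_star_dotProduct_mulVec_of_lyapunov_ode (hB r hr) (hu r hr)
      (hw r hr)).sub <|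
        (hasDerivWithinAt_star_dotProduct_mulVec_of_lyapunov_ode (hB r hr) (hw r hr) (hu r hr)).star
  have hconst := constant_of_has_deriv_right_zero
    (fun r hr => (hderiv r hr).continuousWithinAt)
    (fun r hr => (hderiv r (Ico_subset_Icc_self hr)).mono_of_mem_nhdsWithin
      (Icc_mem_nhdsGE_of_mem hr)) t ⟨hst, le_rfl⟩
  rw [sub_eq_zero.2 (isHermitian_iff_star_dotProduct_mulVec.1 hs (u s) (w s))] at hconst
  exact sub_eq_zero.1 hconst

lemma re_star_dotProduct_mulVec_monotoneOn_of_lyapunov_ode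
    (hB : ∀ r ∈ Icc s t, HasDerivWithinAt B (A r * B r + B r * (A r)ᴴ + Q r) (Icc s t) r)
    (hQ : ∀ r ∈ Icc s t, (Q r).PosSemidef)
    (hw : ∀ r ∈ Icc s t, HasDerivWithinAt w (adjointGenerator (A r) (w r)) (Icc s t) r) :
    MonotoneOn (fun r => RCLike.re (star (w r) ⬝ᵥ (B r *ᵥ w r))) (Icc s t) := by
  have hderiv : ∀ r ∈ Icc s t, HasDerivWithinAt
      (fun r => RCLike.re (star (w r) ⬝ᵥ (B r *ᵥ w r)))
      (RCLike.re (star (w r) ⬝ᵥ (Q r *ᵥ w r))) (Icc s t) r := fun r hr =>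
    (RCLike.reCLM (K := 𝕜)).hasFDerivAt.comp_hasDerivWithinAt r
      (hasDerivWithinAt_star_dotProduct_mulVec_of_lyapunov_ode (hB r hr) (hw r hr) (hw r hr))
  exact monotoneOn_of_hasDerivWithinAt_nonneg (convex_Icc s t)
    (fun r hr => (hderiv r hr).continuousWithinAt)
    (fun r hr => (hderiv r (interior_subset hr)).mono interior_subset)
    (fun r hr => (hQ r (interior_subset hr)).re_dotProduct_nonneg (w r))

lemma posDef_of_lyapunov_ode_of_short {K : ℝ} (hst : s ≤ t) (hA : ContinuousOn A (Icc s t))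
    (hK : ∀ r ∈ Icc s t, ‖adjointGenerator (A r)‖ ≤ K) (hshort : 2 * K * (t - s) ≤ 1)
    (hB : ∀ r ∈ Icc s t, HasDerivWithinAt B (A r * B r + B r * (A r)ᴴ + Q r) (Icc s t) r)
    (hQ : ∀ r ∈ Icc s t, (Q r).PosSemidef) (hs : (B s).PosDef) : (B t).PosDef := by
  have htraj := exists_hasDerivWithinAt_clm_apply_of_short
    (continuous_adjointGenerator.comp_continuousOn hA) hK hshort (right_mem_Icc.2 hst)
  have hherm : (B t).IsHermitian := isHermitian_of_lyapunov_ode_of_trajectories hst hB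
    (fun r hr => (hQ r hr).isHermitian) htraj hs.isHermitian
  refine PosDef.of_dotProduct_mulVec_pos hherm fun x hx => ?_
  obtain ⟨w, rfl, hw⟩ := htraj x
  have hws : w s ≠ 0 := fun h =>
    hx (eqOn_zero_of_hasDerivWithinAt_clm_apply hK hw h (right_mem_Icc.2 hst))
  exact RCLike.pos_iff.2 ⟨(hs.re_dotProduct_pos hws).trans_le
    (re_star_dotProduct_mulVec_monotoneOn_of_lyapunov_ode hB hQ hw (left_mem_Icc.2 hst)
      (right_mem_Icc.2 hst) hst), hherm.im_star_dotProduct_mulVec_self (w t)⟩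

theorem posDef_of_lyapunov_ode (hA : ContinuousOn A (Ici 0))
    (hB : ∀ t ≥ 0, HasDerivWithinAt B (A t * B t + B t * (A t)ᴴ + Q t) (Ici 0) t)
    (hQ : ∀ t ≥ 0, (Q t).PosSemidef) (h0 : (B 0).PosDef) : ∀ t ≥ 0, (B t).PosDef := by
  intro T hT
  obtain ⟨K, hK⟩ := isCompact_Icc.exists_bound_of_continuousOn
    (continuous_adjointGenerator.comp_continuousOn (hA.mono (fun _ hr => hr.1 : Icc 0 T ⊆ Ici 0)))
  have hK0 : 0 ≤ K := (norm_nonneg _).trans (hK 0 ⟨le_rfl, hT⟩)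
  refine forall_mem_Icc_of_short_steps (P := fun r => (B r).PosDef) (δ := 1 / (2 * K + 1))
    (by positivity) h0 ?_ T ⟨hT, le_rfl⟩
  intro s t hs hst htT hδ hBs
  have hsub : Icc s t ⊆ Ici 0 := fun r hr => hs.trans hr.1
  have hshort : 2 * K * (t - s) ≤ 1 := by
    rw [le_div_iff₀ (by positivity)] at hδ
    linarith
  exact posDef_of_lyapunov_ode_of_short hst (hA.mono hsub)
    (fun r hr => hK r ⟨hsub hr, hr.2.trans htT⟩) hshort
    (fun r hr => HasFDerivWithinAt.mono (hB r (hsub hr)) hsub) (fun r hr => hQ r (hsub hr)) hBs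

theorem posDef_of_oldroydB_ode_general {G : ℝ → Matrix n n 𝕜} {c : ℝ}
    (hG : ContinuousOn G (Ici 0))
    (hB : ∀ t ≥ 0, HasDerivWithinAt B
      (G t * B t + B t * (G t)ᴴ - c • B t + Q t) (Ici 0) t)
    (hQ : ∀ t ≥ 0, (Q t).PosSemidef) (h0 : (B 0).PosDef) : ∀ t ≥ 0, (B t).PosDef := by
  classical
  refine posDef_of_lyapunov_ode (A := fun t => G t - (c / 2) • 1) (hG.sub continuousOn_const)
    (fun t ht => ?_) hQ h0
  convert hB t ht using 1
  simp only [conjTranspose_sub, conjTranspose_smul, conjTranspose_one, star_trivial, sub_mul,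
    mul_sub, smul_mul_assoc, mul_smul_comm, one_mul, mul_one]
  module

end Lyapunov

/-- Let `d ≥ 1`, `We > 0`, let `G : ℝ → Matrix (Fin d) (Fin d) ℝ` be continuous (entrywise),
and let `B : ℝ → Matrix (Fin d) (Fin d) ℝ` be differentiable (entrywise) with
`B' t = G t * B t + B t * (G t)ᵀ - (1/We) • B t + (1/We) • I` for all `t ≥ 0`.
If `B 0` is symmetric positive definite, then `B t` is symmetric positive definite for
every `t ≥ 0`. -/
theorem posDef_of_oldroydB_ode (d : ℕ) (hd : 1 ≤ d) (We : ℝ) (hWe : 0 < We)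
    (G B B' : ℝ → Matrix (Fin d) (Fin d) ℝ)
    (hG : ∀ i j, Continuous fun t => G t i j)
    (hB : ∀ t i j, HasDerivAt (fun s => B s i j) (B' t i j) t)
    (heq : ∀ t ≥ 0, B' t = G t * B t + B t * (G t)ᵀ - (1 / We) • B t
      + (1 / We) • (1 : Matrix (Fin d) (Fin d) ℝ))
    (h0 : (B 0).PosDef) :
    ∀ t ≥ 0, (B t).PosDef :=
  posDef_of_oldroydB_ode_general (continuous_matrix hG).continuousOn
    (fun t ht => heq t ht ▸
      (hasDerivAt_pi.2 fun i => hasDerivAt_pi.2 (hB t i)).hasDerivWithinAt)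
    (fun _ _ => PosSemidef.one.smul (R := ℝ) (one_div_pos.2 hWe).le) h0
end

section
/- For every symmetric positive definite real d×d matrix M (with d ≥ 1), one has − ln(det M) − d + tr M ≤ tr((I − M⁻¹)² M). -/
/-!
Since `(1 - M⁻¹)² M = M - 2 + M⁻¹`, the inequality is equivalent to
`log (det M⁻¹) ≤ tr M⁻¹ - d`, the sum of `log t ≤ t - 1` over the eigenvalues `t` of the positive
definite matrix `M⁻¹`.
-/

lemma one_sub_sq_mul_of_mul_eq_one {R : Type*} [Ring R] {a b : R} (h : b * a = 1) :
    (1 - b) ^ 2 * a = a - 2 + b := by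
  have h' : (1 - b) * a = a - 1 := by rw [sub_mul, one_mul, h]
  calc (1 - b) ^ 2 * a = (1 - b) * (a - 1) := by rw [sq, mul_assoc, h']
    _ = a - 1 - (1 - b) := by rw [mul_sub, h', mul_one]
    _ = a - 2 + b := by rw [← one_add_one_eq_two]; abel

section

open Matrix
open scoped ComplexOrder

variable {n : Type*} [Fintype n] [DecidableEq n]

lemma trace_one_sub_inv_sq_mul_self {R : Type*} [CommRing R] {A : Matrix n n R}
    (hA : IsUnit A.det) :
    ((1 - A⁻¹) ^ 2 * A).trace = A.trace - 2 * Fintype.card n + A⁻¹.trace := by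
  rw [one_sub_sq_mul_of_mul_eq_one (nonsing_inv_mul A hA), ← one_add_one_eq_two, trace_add,
    trace_sub, trace_add, trace_one]
  ring

variable {𝕜 : Type*} [RCLike 𝕜] {A : Matrix n n 𝕜}

lemma re_det_eq_prod_eigenvalues (hA : A.IsHermitian) :
    RCLike.re A.det = ∏ i, hA.eigenvalues i := by
  rw [hA.det_eq_prod_eigenvalues, ← RCLike.ofReal_prod, RCLike.ofReal_re]

lemma re_det_inv (hA : A.IsHermitian) : RCLike.re A⁻¹.det = (RCLike.re A.det)⁻¹ := by
  rw [det_nonsing_inv, Ring.inverse_eq_inv', hA.det_eq_prod_eigenvalues, ← RCLike.ofReal_prod,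
    ← RCLike.ofReal_inv, RCLike.ofReal_re, RCLike.ofReal_re]

lemma log_re_det_le_re_trace_sub_card (hA : A.PosDef) :
    Real.log (RCLike.re A.det) ≤ RCLike.re A.trace - Fintype.card n := by
  have hpos := hA.eigenvalues_pos
  calc Real.log (RCLike.re A.det)
      = ∑ i, Real.log (hA.isHermitian.eigenvalues i) := by
        rw [re_det_eq_prod_eigenvalues hA.isHermitian, Real.log_prod fun i _ => (hpos i).ne']
    _ ≤ ∑ i, (hA.isHermitian.eigenvalues i - 1) :=
        Finset.sum_le_sum fun i _ => Real.log_le_sub_one_of_pos (hpos i)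
    _ = RCLike.re A.trace - Fintype.card n := by
        rw [hA.isHermitian.trace_eq_sum_eigenvalues, ← RCLike.ofReal_sum, RCLike.ofReal_re,
          Finset.sum_sub_distrib, Finset.sum_const, Finset.card_univ, nsmul_one]

theorem entropy_le_fisher_information_general (hA : A.PosDef) :
    -Real.log (RCLike.re A.det) - Fintype.card n + RCLike.re A.trace ≤
      RCLike.re ((1 - A⁻¹) ^ 2 * A).trace := by
  have hlog : -Real.log (RCLike.re A.det) ≤ RCLike.re A⁻¹.trace - Fintype.card n := by
    rw [← Real.log_inv, ← re_det_inv hA.isHermitian]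
    exact log_re_det_le_re_trace_sub_card hA.inv
  have hfisher : RCLike.re ((1 - A⁻¹) ^ 2 * A).trace =
      RCLike.re A.trace - 2 * Fintype.card n + RCLike.re A⁻¹.trace := by
    rw [trace_one_sub_inv_sq_mul_self ((isUnit_iff_isUnit_det A).mp hA.isUnit)]
    simp
  linarith

end

/-- For every symmetric positive definite real `d × d` matrix `M` (with `d ≥ 1`),
`- ln (det M) - d + tr M ≤ tr ((I - M⁻¹)² M)` (the log-Sobolev inequality for Gaussian
random variables translated to their covariance matrices). -/
theorem entropy_le_fisher_information (d : ℕ) (hd : 1 ≤ d)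
    (M : Matrix (Fin d) (Fin d) ℝ) (hM : M.PosDef) :
    -Real.log M.det - d + M.trace ≤ ((1 - M⁻¹) ^ 2 * M).trace := by
  simpa using entropy_le_fisher_information_general hM
end

section
/- Let d ≥ 1 and b > 0 be a real number. For every symmetric positive definite real d×d matrix M with tr M < b, one has − ln(det M) − b · ln(1 − tr M / b) ≥ −(b + d) · ln(b / (b + d)). -/
/-!
By concavity, `log x ≤ log c + (x / c - 1)` for the tangent line at `c = b / (b + d)`. Sum this
bound over the eigenvalues of `M` (weight one each) and over the point `1 - tr M / b` (weight `b`).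
The trace cancels, so the terms `x / c - 1` add up to `b / c - (b + d) = 0`, and `(b + d) * log c`
remains.
-/

lemma log_le_log_add_div_sub_one {c x : ℝ} (hc : 0 < c) (hx : 0 < x) :
    Real.log x ≤ Real.log c + (x / c - 1) := by
  rw [← sub_le_iff_le_add', ← Real.log_div hx.ne' hc.ne']
  exact Real.log_le_sub_one_of_pos (div_pos hx hc)

section PosDef

open scoped ComplexOrder

variable {n 𝕜 : Type*} [Fintype n] [DecidableEq n] [RCLike 𝕜] {M : Matrix n n 𝕜}

lemma re_trace_eq_sum_eigenvalues (hM : M.IsHermitian) :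
    RCLike.re M.trace = ∑ i, hM.eigenvalues i := by
  simp [hM.trace_eq_sum_eigenvalues]

lemma log_re_det_eq_sum_log_eigenvalues (hM : M.PosDef) :
    Real.log (RCLike.re M.det) = ∑ i, Real.log (hM.isHermitian.eigenvalues i) := by
  rw [hM.isHermitian.det_eq_prod_eigenvalues, ← RCLike.ofReal_prod, RCLike.ofReal_re,
    Real.log_prod fun i _ ↦ (hM.eigenvalues_pos i).ne']

lemma log_re_det_le_card_mul_log_add (hM : M.PosDef) {c : ℝ} (hc : 0 < c) :
    Real.log (RCLike.re M.det) ≤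
      Fintype.card n * Real.log c + (RCLike.re M.trace / c - Fintype.card n) := by
  rw [log_re_det_eq_sum_log_eigenvalues hM, re_trace_eq_sum_eigenvalues hM.isHermitian]
  calc ∑ i, Real.log (hM.isHermitian.eigenvalues i)
      ≤ ∑ i, (Real.log c + (hM.isHermitian.eigenvalues i / c - 1)) :=
        Finset.sum_le_sum fun i _ ↦ log_le_log_add_div_sub_one hc (hM.eigenvalues_pos i)
    _ = Fintype.card n * Real.log c +
          ((∑ i, hM.isHermitian.eigenvalues i) / c - Fintype.card n) := by
        simp [Finset.sum_add_distrib, Finset.sum_div]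

theorem fenep_entropy_lower_bound_general (hM : M.PosDef) {b : ℝ}
    (htr : RCLike.re M.trace < b) :
    -Real.log (RCLike.re M.det) - b * Real.log (1 - RCLike.re M.trace / b) ≥
      -(b + Fintype.card n) * Real.log (b / (b + Fintype.card n)) := by
  have hb : 0 < b := (RCLike.nonneg_iff.mp hM.posSemidef.trace_nonneg).1.trans_lt htr
  set c := b / (b + Fintype.card n) with hc_def
  have hc : 0 < c := by positivity
  have hx : 0 < 1 - RCLike.re M.trace / b := sub_pos.mpr ((div_lt_one hb).mpr htr)
  have hdet := log_re_det_le_card_mul_log_add hM hc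
  have hlog : b * Real.log (1 - RCLike.re M.trace / b) ≤
      b * (Real.log c + ((1 - RCLike.re M.trace / b) / c - 1)) :=
    mul_le_mul_of_nonneg_left (log_le_log_add_div_sub_one hc hx) hb.le
  have hcancel : RCLike.re M.trace / c - Fintype.card n +
      b * ((1 - RCLike.re M.trace / b) / c - 1) = 0 := by
    rw [hc_def]
    field_simp
    ring
  linarith

end PosDef

/-- Let `d ≥ 1` and `b > 0`. For every symmetric positive definite real `d × d` matrix `M`
with `tr M < b`, `- ln (det M) - b * ln (1 - tr M / b) ≥ -(b + d) * ln (b / (b + d))`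
(lower bound for the FENE-P entropy). -/
theorem fenep_entropy_lower_bound (d : ℕ) (hd : 1 ≤ d) (b : ℝ) (hb : 0 < b)
    (M : Matrix (Fin d) (Fin d) ℝ) (hM : M.PosDef) (htr : M.trace < b) :
    -Real.log M.det - b * Real.log (1 - M.trace / b) ≥
      -(b + d) * Real.log (b / (b + d)) := by
  simpa only [RCLike.re_to_real, Fintype.card_fin] using
    fenep_entropy_lower_bound_general hM htr
end
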